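/- If X is a Markov chain in ℕ with cemetery 0 on a probability space (Ω,𝔉,ℙ), then ι(X) = (P_N(X))_{N∈ℕ} is a virtual Markov chain. Conversely, if X = (X_N)_{N∈ℕ} is a virtual Markov chain on (Ω,𝔉,ℙ) satisfying ℙ(X ∈ ι(𝒞)) = 1, then there exists a Markov chain X in ℕ with cemetery 0 on (Ω,𝔉,ℙ) such that X = ι(X) almost surely. -/

import Mathlib

open MeasureTheory

/-- The path space 𝒞: sequences on ℕ₀ = {0,1,2,...} for which the cemetery state 0 is
absorbing. -/
def PathSpace : Set (ℕ → ℕ) := {x | ∀ i j : ℕ, i ≤ j → x i = 0 → x j = 0}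

/-- The path space 𝒞_N: paths taking values in {0,...,N}. -/
def PathSpaceN (N : ℕ) : Set (ℕ → ℕ) := {x | x ∈ PathSpace ∧ ∀ i, x i ≤ N}

/-- The successive indices I_{x,N}(j) (valued in ℕ∞) at which the path `x` visits the set
{0,...,N}; here `inf ∅ = ⊤ = ∞`. -/
noncomputable def hitIdx (x : ℕ → ℕ) (N : ℕ) : ℕ → ℕ∞
  | 0 => sInf {e : ℕ∞ | ∃ i : ℕ, e = (i : ℕ∞) ∧ x i ≤ N}
  | j + 1 => sInf {e : ℕ∞ | ∃ i : ℕ, e = (i : ℕ∞) ∧ hitIdx x N j < (i : ℕ∞) ∧ x i ≤ N}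

/-- The projection P_N : 𝒞 → 𝒞_N. -/
noncomputable def proj (N : ℕ) (x : ℕ → ℕ) (j : ℕ) : ℕ :=
  if hitIdx x N j = ⊤ then 0 else x (hitIdx x N j).toNat

/-- The virtual path space 𝓒, indexed by ℕ = {1,2,...} (as `ℕ+`). -/
def VirtualPathSpace : Set (ℕ+ → ℕ → ℕ) :=
  {x | (∀ N : ℕ+, x N ∈ PathSpaceN N) ∧ ∀ N : ℕ+, proj N (x (N + 1)) = x N}

/-- `X` is a Markov chain (on ℕ₀) under `P` with initial distribution `ν` and transition
matrix `K`: all its finite-dimensional distributions are given by the product formula. -/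
def IsMarkovChain {Ω : Type*} [MeasurableSpace Ω] (P : Measure Ω)
    (X : ℕ → Ω → ℕ) (ν : ℕ → ℝ) (K : ℕ → ℕ → ℝ) : Prop :=
  (∀ i, Measurable (X i)) ∧
  ∀ (l : ℕ) (a : ℕ → ℕ),
    P {ω | ∀ i ≤ l, X i ω = a i}
      = ENNReal.ofReal (ν (a 0) * ∏ k ∈ Finset.Icc 1 l, K (a (k - 1)) (a k))

/-- `K` is a row-stochastic matrix on ℕ₀ with entries in [0,1]. -/
def IsStochastic (K : ℕ → ℕ → ℝ) : Prop :=
  (∀ a b, 0 ≤ K a b) ∧ ∀ a, HasSum (K a) 1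

/-- Membership in 𝒦: row-stochastic with `K 0 0 = 1`. -/
def MemK (K : ℕ → ℕ → ℝ) : Prop := IsStochastic K ∧ K 0 0 = 1

/-- Membership in 𝒦_N: row-stochastic with `K a a = 1` for all `a ∉ {1,...,N}`. -/
def MemKN (N : ℕ) (K : ℕ → ℕ → ℝ) : Prop :=
  IsStochastic K ∧ ∀ a : ℕ, ¬(1 ≤ a ∧ a ≤ N) → K a a = 1

/-- `ν` is a probability vector on ℕ₀. -/
def IsProbVec (ν : ℕ → ℝ) : Prop := (∀ a, 0 ≤ ν a) ∧ HasSum ν 1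

/-- `X` is a virtual Markov chain under `P`: it is (a.s.) 𝓒-valued and each coordinate
process is a Markov chain in {1,...,N} with cemetery 0. -/
def IsVMC {Ω : Type*} [MeasurableSpace Ω] (P : Measure Ω) (X : Ω → ℕ+ → ℕ → ℕ) : Prop :=
  (∀ᵐ ω ∂P, X ω ∈ VirtualPathSpace) ∧
  ∀ N : ℕ+, ∃ (ν : ℕ → ℝ) (K : ℕ → ℕ → ℝ),
    IsProbVec ν ∧ (∀ a : ℕ, (N : ℕ) < a → ν a = 0) ∧ MemKN N K ∧
    IsMarkovChain P (fun i ω => X ω N i) ν K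

open Filter Set
open scoped ENNReal Topology

/-!
The `j`-th visit of `x` to `{0, …, N}` takes place at time `t` iff `x t ≤ N` and exactly `j` of the
earlier times are visits. Hence this event, and the values of `proj N x` up to index `j` on it, only
depend on `x 0, …, x t`. Summing over the value `t` of this stopping time, the Markov property of
the chain at time `t` passes to its trace `proj N`: a chain started afresh at `a` has a trace
started afresh at `a`.

Conversely, `proj N x` agrees with `x` up to any fixed time once `N` is large, so if the virtual
chain comes from a path then that path is the pointwise limit of the `X_N`. The probabilities of
events depending on finitely many coordinates converge, and a quotient of two of them, the
transition probability, converges wherever the state is visited with positive probability.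
-/

section Trace

variable {x y : ℕ → ℕ} {M N j t : ℕ}

theorem sInf_natCast_eq_iff {p : ℕ → Prop} {t : ℕ} :
    sInf {e : ℕ∞ | ∃ i : ℕ, e = (i : ℕ∞) ∧ p i} = t ↔ p t ∧ ∀ i < t, ¬ p i := by
  constructor
  · intro h
    have hne : {e : ℕ∞ | ∃ i : ℕ, e = (i : ℕ∞) ∧ p i}.Nonempty := by
      by_contra hempty
      simp [not_nonempty_iff_eq_empty.1 hempty] at h
    obtain ⟨i, hi, hpi⟩ := csInf_mem hne
    obtain rfl : t = i := by exact_mod_cast h.symm.trans hi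
    refine ⟨hpi, fun i hit hpi => hit.not_ge ?_⟩
    exact_mod_cast h.symm.trans_le (sInf_le ⟨i, rfl, hpi⟩)
  · rintro ⟨ht, hmin⟩
    refine le_antisymm (sInf_le ⟨t, rfl, ht⟩) (le_sInf ?_)
    rintro _ ⟨i, rfl, hi⟩
    exact_mod_cast not_lt.1 fun hit => hmin i hit hi

theorem exists_count_eq_iff_lt_count {p : ℕ → Prop} [DecidablePred p] :
    (∃ s < t, p s ∧ Nat.count p s = j) ↔ j < Nat.count p t := by
  constructor
  · rintro ⟨s, hst, hs, rfl⟩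
    exact Nat.count_strict_mono hs hst
  · induction t with
    | zero => simp
    | succ t ih => grind

theorem hitIdx_eq_coe_iff :
    hitIdx x N j = t ↔ x t ≤ N ∧ Nat.count (fun i => x i ≤ N) t = j := by
  induction j generalizing t with
  | zero => rw [hitIdx, sInf_natCast_eq_iff, Nat.count_iff_forall_not]
  | succ j ih =>
    have hlt (i : ℕ) : hitIdx x N j < i ↔ j < Nat.count (fun i => x i ≤ N) i := by
      rw [← exists_count_eq_iff_lt_count]
      simp_rw [← ih]
      constructor
      · intro h
        obtain ⟨s, hs⟩ := ENat.ne_top_iff_exists.1 h.ne_top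
        exact ⟨s, by simpa [← hs] using h, hs.symm⟩
      · rintro ⟨s, hsi, hs⟩
        simpa [hs] using hsi
    rw [hitIdx, sInf_natCast_eq_iff]
    simp_rw [hlt]
    constructor
    · rintro ⟨⟨hj, ht⟩, hmin⟩
      refine ⟨ht, le_antisymm (not_lt.1 fun hlt => ?_) hj⟩
      obtain ⟨s, hst, hs, hcount⟩ := exists_count_eq_iff_lt_count.2 hlt
      exact hmin s hst ⟨by omega, hs⟩
    · rintro ⟨ht, hcount⟩
      refine ⟨⟨by omega, ht⟩, fun i hit hi => ?_⟩
      have := Nat.count_strict_mono (p := fun i => x i ≤ N) hi.2 hit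
      omega

theorem proj_of_hitIdx_eq (h : hitIdx x N j = t) : proj N x j = x t := by
  simp [proj, h]

theorem lt_proj_iff {c : ℕ} : c < proj N x j ↔ ∃ t : ℕ, hitIdx x N j = t ∧ c < x t := by
  constructor
  · intro h
    have hne : hitIdx x N j ≠ ⊤ := fun htop => by simp [proj, htop] at h
    obtain ⟨t, ht⟩ := ENat.ne_top_iff_exists.1 hne
    exact ⟨t, ht.symm, proj_of_hitIdx_eq ht.symm ▸ h⟩
  · rintro ⟨t, ht, h⟩
    rwa [proj_of_hitIdx_eq ht]

theorem proj_le : proj N x j ≤ N :=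
  not_lt.1 fun h =>
    have ⟨_, ht, hlt⟩ := lt_proj_iff.1 h
    hlt.not_ge (hitIdx_eq_coe_iff.1 ht).1

theorem exists_hitIdx_eq_of_le {i : ℕ} (h : hitIdx x N j = t) (hij : i ≤ j) :
    ∃ s ≤ t, hitIdx x N i = s := by
  simp_rw [hitIdx_eq_coe_iff] at h ⊢
  rcases hij.eq_or_lt with rfl | hij
  · exact ⟨t, le_rfl, h⟩
  · obtain ⟨s, hst, hs⟩ := exists_count_eq_iff_lt_count.2 (h.2 ▸ hij)
    exact ⟨s, hst.le, hs⟩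

theorem mem_pathSpace_iff : x ∈ PathSpace ↔ ∀ i, x i = 0 → x (i + 1) = 0 :=
  ⟨fun hx i => hx i (i + 1) i.le_succ, fun hx _ _ hij hi =>
    Nat.le_induction hi (fun j _ => hx j) _ hij⟩

theorem proj_mem_pathSpaceN (hx : x ∈ PathSpace) : proj N x ∈ PathSpaceN N := by
  refine ⟨fun i j hij hi => ?_, fun _ => proj_le⟩
  by_contra hj
  obtain ⟨t, ht, hpos⟩ := lt_proj_iff.1 (Nat.pos_of_ne_zero hj)
  obtain ⟨s, hst, hs⟩ := exists_hitIdx_eq_of_le ht hij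
  exact hpos.ne' (hx s t hst (proj_of_hitIdx_eq hs ▸ hi))

theorem count_proj_count (hNM : N ≤ M) (t : ℕ) :
    Nat.count (fun i => proj M x i ≤ N) (Nat.count (fun i => x i ≤ M) t) =
      Nat.count (fun i => x i ≤ N) t := by
  induction t with
  | zero => simp
  | succ t ih =>
    by_cases ht : x t ≤ M
    · simp [Nat.count_succ, ht, ih, proj_of_hitIdx_eq (hitIdx_eq_coe_iff.2 ⟨ht, rfl⟩)]
    · have htN : ¬ x t ≤ N := fun h => ht (h.trans hNM)
      simp [Nat.count_succ, ht, htN, ih]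

theorem proj_proj (hNM : N ≤ M) : proj N (proj M x) = proj N x := by
  funext j
  refine eq_of_forall_lt_iff fun c => ?_
  simp_rw [lt_proj_iff (N := N), hitIdx_eq_coe_iff]
  constructor
  · rintro ⟨s, ⟨hsN, hcount⟩, hc⟩
    obtain ⟨t, ht, -⟩ := lt_proj_iff.1 hc
    rw [proj_of_hitIdx_eq ht] at hsN hc
    obtain ⟨-, rfl⟩ := hitIdx_eq_coe_iff.1 ht
    exact ⟨t, ⟨hsN, by rwa [count_proj_count hNM] at hcount⟩, hc⟩
  · rintro ⟨t, ⟨htN, hcount⟩, hc⟩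
    have ht := hitIdx_eq_coe_iff.2 ⟨htN.trans hNM, rfl⟩
    refine ⟨Nat.count (fun i => x i ≤ M) t, ?_⟩
    rw [count_proj_count hNM, proj_of_hitIdx_eq ht]
    exact ⟨⟨htN, hcount⟩, hc⟩

theorem iota_mem_virtualPathSpace (hx : x ∈ PathSpace) :
    (fun (N : ℕ+) (i : ℕ) => proj N x i) ∈ VirtualPathSpace :=
  ⟨fun _ => proj_mem_pathSpaceN hx, fun N => proj_proj (by simp)⟩

theorem proj_eq_of_forall_le (h : ∀ i ≤ j, x i ≤ N) : proj N x j = x j :=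
  proj_of_hitIdx_eq <| hitIdx_eq_coe_iff.2
    ⟨h j le_rfl, Nat.count_iff_forall.2 fun i hi => h i hi.le⟩

theorem tendsto_proj (x : ℕ → ℕ) : Tendsto (fun N => proj N x) atTop (𝓝 x) := by
  refine tendsto_pi_nhds.2 fun j => tendsto_const_nhds.congr' ?_
  have hbdd : ∀ᶠ N in atTop, ∀ i ∈ Iic j, x i ≤ N :=
    (finite_Iic j).eventually_all.2 fun i _ => eventually_ge_atTop (x i)
  filter_upwards [hbdd] with N hN using (proj_eq_of_forall_le hN).symm

/-- The time shift on path space: the path seen from time `t` on. -/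
def pathShift {E : Type*} (t : ℕ) (x : ℕ → E) : ℕ → E := fun i => x (t + i)

theorem proj_pathShift (h : hitIdx x N j = t) (k : ℕ) :
    proj N (pathShift t x) k = proj N x (j + k) := by
  refine eq_of_forall_lt_iff fun c => ?_
  obtain ⟨-, rfl⟩ := hitIdx_eq_coe_iff.1 h
  simp_rw [lt_proj_iff, hitIdx_eq_coe_iff]
  constructor
  · rintro ⟨s, ⟨hs, rfl⟩, hc⟩
    exact ⟨t + s, ⟨hs, Nat.count_add ..⟩, hc⟩
  · rintro ⟨u, ⟨hu, hcount⟩, hc⟩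
    obtain ⟨s, rfl⟩ : ∃ s, u = t + s := Nat.exists_eq_add_of_le <| not_lt.1 fun hut => by
      have := Nat.count_strict_mono (p := fun i => x i ≤ N) hu hut
      omega
    exact ⟨s, ⟨hu, Nat.add_left_cancel ((Nat.count_add ..).symm.trans hcount)⟩, hc⟩

theorem hitIdx_eq_coe_congr (hxy : ∀ i ≤ t, x i = y i) :
    hitIdx x N j = t ↔ hitIdx y N j = t := by
  have hcount : Nat.count (fun i => x i ≤ N) t = Nat.count (fun i => y i ≤ N) t := by
    simp only [Nat.count_eq_card_filter_range]
    congr 1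
    exact Finset.filter_congr fun i hi => by rw [hxy i (Finset.mem_range.1 hi).le]
  rw [hitIdx_eq_coe_iff, hitIdx_eq_coe_iff, hxy t le_rfl, hcount]

theorem proj_congr {i : ℕ} (hxy : ∀ i ≤ t, x i = y i) (ht : hitIdx x N j = t) (hij : i ≤ j) :
    proj N x i = proj N y i := by
  obtain ⟨s, hst, hs⟩ := exists_hitIdx_eq_of_le ht hij
  have hs' := (hitIdx_eq_coe_congr fun i hi => hxy i (hi.trans hst)).1 hs
  rw [proj_of_hitIdx_eq hs, proj_of_hitIdx_eq hs', hxy s hst]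

end Trace

section Cylinder

variable {E : Type*} [Countable E] [MeasurableSpace E] [MeasurableSingletonClass E]
  {μ ρ : Measure (ℕ → E)} {F : Set (ℕ → E)} {t : ℕ}

theorem exists_preimage_domRestrict_eq (hF : DependsOn (· ∈ F) (Iic t)) :
    ∃ S : Set (Iic t → E), MeasurableSet S ∧ (Iic t).domRestrict ⁻¹' S = F := by
  obtain ⟨g, hg⟩ := dependsOn_iff_exists_comp.1 hF
  exact ⟨{v | g v}, (to_countable _).measurableSet, by ext x; exact (congrFun hg x).symm.to_iff⟩

theorem measurableSet_of_dependsOn (hF : DependsOn (· ∈ F) (Iic t)) : MeasurableSet F := by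
  obtain ⟨S, hS, rfl⟩ := exists_preimage_domRestrict_eq hF
  exact measurable_pi_lambda _ (fun i => measurable_pi_apply _) hS

theorem measure_eq_of_dependsOn
    (h : ∀ w, μ (PiNat.cylinder w (t + 1)) = ρ (PiNat.cylinder w (t + 1)))
    (hF : DependsOn (· ∈ F) (Iic t)) : μ F = ρ F := by
  have hmeas : Measurable ((Iic t).domRestrict : (ℕ → E) → Iic t → E) :=
    measurable_pi_lambda _ fun i => measurable_pi_apply _
  have hfiber (w : ℕ → E) :
      (Iic t).domRestrict ⁻¹' ({(Iic t).domRestrict w} : Set (Iic t → E)) =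
        PiNat.cylinder w (t + 1) := by
    ext x
    simp [funext_iff, PiNat.mem_cylinder_iff]
  have hmap : μ.map (Iic t).domRestrict = ρ.map (Iic t).domRestrict := by
    refine Measure.ext_of_singleton fun v => ?_
    simp_rw [Measure.map_apply hmeas (measurableSet_singleton v)]
    rcases ((Iic t).domRestrict ⁻¹' {v} : Set (ℕ → E)).eq_empty_or_nonempty with h0 | ⟨w, rfl⟩
    · simp [h0]
    · rw [hfiber, h]
  obtain ⟨S, hS, rfl⟩ := exists_preimage_domRestrict_eq hF
  rw [← Measure.map_apply hmeas hS, hmap, Measure.map_apply hmeas hS]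

theorem measure_ext_of_cylinder [IsFiniteMeasure μ]
    (h : ∀ w t, μ (PiNat.cylinder w (t + 1)) = ρ (PiNat.cylinder w (t + 1))) : μ = ρ := by
  refine ext_of_generate_finite _ generateFrom_measurableCylinders.symm
    isPiSystem_measurableCylinders (fun F hF => ?_) ?_
  · obtain ⟨s, S, -, rfl⟩ := (mem_measurableCylinders F).1 hF
    refine measure_eq_of_dependsOn (fun w => h w (s.sup id)) fun x y hxy => ?_
    have hres : s.restrict x = s.restrict y :=
      funext fun i => hxy i (Finset.le_sup (f := id) i.2)
    simp [MeasureTheory.cylinder, hres]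
  · exact measure_eq_of_dependsOn (t := 0) (fun w => h w 0) fun _ _ _ => rfl

end Cylinder

section Transition

variable {E : Type*}

/-- Events determined by the coordinates `x 0, …, x t` which force `x t = a`; these are the pasts
on which the Markov property at time `t` is conditioned. -/
structure IsHistory (a : E) (t : ℕ) (F : Set (ℕ → E)) : Prop where
  dependsOn : DependsOn (· ∈ F) (Iic t)
  subset_eval : F ⊆ {x | x t = a}

theorem IsHistory.inter_eval_self {F : Set (ℕ → E)} {a : E} {t : ℕ} (hF : IsHistory a t F) :
    F ∩ {x | x t = a} = F :=
  inter_eq_left.2 hF.subset_eval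

theorem IsHistory.inter_eval_of_ne {F : Set (ℕ → E)} {a b : E} {t : ℕ} (hF : IsHistory a t F)
    (hab : a ≠ b) : F ∩ {x | x t = b} = ∅ :=
  disjoint_iff_inter_eq_empty.1 <| disjoint_left.2 fun _ hx hxb =>
    hab ((hF.subset_eval hx).symm.trans hxb)

theorem isHistory_cylinder (w : ℕ → E) (t : ℕ) :
    IsHistory (w t) t (PiNat.cylinder w (t + 1)) where
  dependsOn x y hxy := by
    simp only [PiNat.mem_cylinder_iff, eq_iff_iff]
    exact forall₂_congr fun i hi => by rw [hxy i (Nat.le_of_lt_succ hi)]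
  subset_eval _ hx := hx t t.lt_succ_self

theorem IsHistory.inter_of_dependsOn {F G : Set (ℕ → E)} {a : E} {s t : ℕ} (hG : IsHistory a t G)
    (hF : DependsOn (· ∈ F) (Iic s)) (hst : s ≤ t) : IsHistory a t (F ∩ G) where
  dependsOn x y hxy := by
    have hF' : (x ∈ F) = (y ∈ F) := hF fun i hi => hxy i (Iic_subset_Iic.2 hst hi)
    have hG' : (x ∈ G) = (y ∈ G) := hG.dependsOn hxy
    simp only [mem_inter_iff, hF', hG']
  subset_eval := inter_subset_right.trans hG.subset_eval

theorem IsHistory.preimage_pathShift {F : Set (ℕ → E)} {a : E} {s : ℕ} (hF : IsHistory a s F)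
    (t : ℕ) : IsHistory a (t + s) (pathShift t ⁻¹' F) where
  dependsOn _ _ hxy := hF.dependsOn fun i hi => hxy (t + i) (by simpa using hi)
  subset_eval _ hx := hF.subset_eval hx

theorem isHistory_eval_eq (a : E) (t : ℕ) : IsHistory a t {x | x t = a} where
  dependsOn x y hxy := by simp [hxy t (mem_Iic.2 le_rfl)]
  subset_eval := Subset.rfl

variable [MeasurableSpace E]

/-- The coordinate process is a Markov chain under `μ` with transition probabilities `k`, whatever
its initial law. As only the values of `k` at pairs charged by `μ` matter, `k` is not required to be
stochastic. -/
def HasTransition (μ : Measure (ℕ → E)) (k : E → E → ℝ≥0∞) : Prop :=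
  ∀ w t b, μ (PiNat.cylinder w (t + 1) ∩ {x | x (t + 1) = b}) =
    μ (PiNat.cylinder w (t + 1)) * k (w t) b

/-- `κ` is a regular version, under `μ`, of the law of the trajectory from a time at which the chain
sits at `a`, given the past up to that time. -/
def IsFutureLaw (μ : Measure (ℕ → E)) (a : E) (κ : Measure (ℕ → E)) : Prop :=
  ∀ ⦃t F A⦄, IsHistory a t F → MeasurableSet A → μ (F ∩ pathShift t ⁻¹' A) = μ F * κ A

theorem measurable_pathShift (t : ℕ) : Measurable (pathShift t : (ℕ → E) → ℕ → E) :=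
  measurable_pi_lambda _ fun i => measurable_pi_apply (t + i)

theorem isFutureLaw_dirac {μ : Measure (ℕ → E)} {a : E}
    (habs : ∀ᵐ x ∂μ, ∀ i, x i = a → x (i + 1) = a) :
    IsFutureLaw μ a (.dirac fun _ => a) := by
  intro t F A hF hA
  have hstay : ∀ᵐ x ∂μ, x ∈ F → pathShift t x = fun _ => a := by
    filter_upwards [habs] with x hx hxF
    funext i
    induction i with
    | zero => exact hF.subset_eval hxF
    | succ i ih => exact hx (t + i) ih
  rw [Measure.dirac_apply' _ hA]
  by_cases ha : (fun _ => a) ∈ A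
  · rw [indicator_of_mem ha, Pi.one_apply, mul_one]
    refine measure_congr ?_
    filter_upwards [hstay] with x hx
    exact propext (and_iff_left_of_imp fun hxF => by rwa [mem_preimage, hx hxF])
  · rw [indicator_of_notMem ha, mul_zero]
    refine measure_eq_zero_iff_ae_notMem.2 ?_
    filter_upwards [hstay] with x hx hxA
    exact ha (hx hxA.1 ▸ hxA.2)

variable [Countable E] [MeasurableSingletonClass E] {μ : Measure (ℕ → E)} {k : E → E → ℝ≥0∞}
  {F G A : Set (ℕ → E)} {a b : E} {s t : ℕ}

theorem IsHistory.measurableSet (hF : IsHistory a t F) : MeasurableSet F :=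
  measurableSet_of_dependsOn hF.dependsOn

theorem measurableSet_eval_eq (t : ℕ) (b : E) : MeasurableSet {x : ℕ → E | x t = b} :=
  (isHistory_eval_eq b t).measurableSet

theorem measurableSet_forall_eval_succ_eq (a : E) :
    MeasurableSet {x : ℕ → E | ∀ i, x i = a → x (i + 1) = a} := by
  rw [ofPred_forall]
  exact .iInter fun i => (measurableSet_eval_eq i a).imp (measurableSet_eval_eq (i + 1) a)

theorem HasTransition.measure_inter_eval_succ (h : HasTransition μ k) (hF : IsHistory a t F)
    (b : E) : μ (F ∩ {x | x (t + 1) = b}) = μ F * k a b := by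
  have hagree (w : ℕ → E) :
      μ.restrict ({x | x t = a} ∩ {x | x (t + 1) = b}) (PiNat.cylinder w (t + 1)) =
        (k a b • μ.restrict {x | x t = a}) (PiNat.cylinder w (t + 1)) := by
    have hw := isHistory_cylinder w t
    rw [Measure.smul_apply, Measure.restrict_apply hw.measurableSet,
      Measure.restrict_apply hw.measurableSet, ← inter_assoc, smul_eq_mul, mul_comm]
    by_cases ha : w t = a
    · rw [← ha, hw.inter_eval_self, h]
    · simp [hw.inter_eval_of_ne ha]
  have hF' := measure_eq_of_dependsOn hagree hF.dependsOn
  rwa [Measure.smul_apply, Measure.restrict_apply hF.measurableSet,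
    Measure.restrict_apply hF.measurableSet, ← inter_assoc, hF.inter_eval_self, smul_eq_mul,
    mul_comm] at hF'

theorem HasTransition.ae_eval_succ_eq (h : HasTransition μ k) (ha : ∀ b ≠ a, k a b = 0) :
    ∀ᵐ x ∂μ, ∀ i, x i = a → x (i + 1) = a := by
  refine ae_all_iff.2 fun i => ?_
  have hnull (b : E) : ∀ᵐ x ∂μ, b ≠ a → ¬ (x i = a ∧ x (i + 1) = b) := by
    by_cases hb : b = a
    · simp [hb]
    · have hzero := h.measure_inter_eval_succ (isHistory_eval_eq a i) b
      rw [ha b hb, mul_zero] at hzero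
      exact (measure_eq_zero_iff_ae_notMem.1 hzero).mono fun x hx _ => hx
  filter_upwards [ae_all_iff.2 hnull] with x hx hi
  by_contra hne
  exact hx _ hne ⟨hi, rfl⟩

theorem HasTransition.measure_inter_pathShift_cylinder (h : HasTransition μ k)
    (hF : DependsOn (· ∈ F) (Iic t)) (v : ℕ → E) (m : ℕ) :
    μ (F ∩ pathShift t ⁻¹' PiNat.cylinder v (m + 1)) =
      μ (F ∩ {x | x t = v 0}) * ∏ i ∈ Finset.range m, k (v i) (v (i + 1)) := by
  induction m with
  | zero =>
    simp only [Finset.range_zero, Finset.prod_empty, mul_one]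
    congr 2
    ext x
    simp [PiNat.mem_cylinder_iff, pathShift]
  | succ m ih =>
    have hpast : IsHistory (v m) (t + m) (F ∩ pathShift t ⁻¹' PiNat.cylinder v (m + 1)) :=
      ((isHistory_cylinder v m).preimage_pathShift t).inter_of_dependsOn hF (t.le_add_right m)
    rw [Finset.prod_range_succ, ← mul_assoc, ← ih, ← h.measure_inter_eval_succ hpast, inter_assoc]
    congr 2
    ext x
    simp [PiNat.mem_cylinder_iff, pathShift, Nat.forall_lt_succ_right, add_assoc]

-- The law of the future given a history depends on its endpoint only; cross-multiplied, this needs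
-- no division by the mass of a null history.
theorem HasTransition.measure_inter_pathShift_mul [IsFiniteMeasure μ] (h : HasTransition μ k)
    (hF : IsHistory a s F) (hG : IsHistory a t G) (hA : MeasurableSet A) :
    μ (F ∩ pathShift s ⁻¹' A) * μ G = μ (G ∩ pathShift t ⁻¹' A) * μ F := by
  have hcyl {s : ℕ} {F : Set (ℕ → E)} (hF : IsHistory a s F) (v : ℕ → E) (m : ℕ) :
      μ (F ∩ pathShift s ⁻¹' PiNat.cylinder v (m + 1)) =
        μ F * (({v | v 0 = a}.indicator 1 v : ℝ≥0∞) *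
          ∏ i ∈ Finset.range m, k (v i) (v (i + 1))) := by
    rw [h.measure_inter_pathShift_cylinder hF.dependsOn, ← mul_assoc]
    congr 1
    by_cases ha : v 0 = a
    · simp [ha, hF.inter_eval_self]
    · simp [ha, hF.inter_eval_of_ne (Ne.symm ha)]
  have hlaw (s : ℕ) (F : Set (ℕ → E)) {B : Set (ℕ → E)} (hB : MeasurableSet B) :
      (μ.restrict F).map (pathShift s) B = μ (F ∩ pathShift s ⁻¹' B) := by
    rw [Measure.map_apply (measurable_pathShift s) hB,
      Measure.restrict_apply (measurable_pathShift s hB), inter_comm]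
  have heq : μ G • (μ.restrict F).map (pathShift s) = μ F • (μ.restrict G).map (pathShift t) := by
    have : IsFiniteMeasure (μ G • (μ.restrict F).map (pathShift s)) :=
      Measure.smul_finite _ (measure_ne_top μ G)
    refine measure_ext_of_cylinder fun v m => ?_
    have hv := (isHistory_cylinder v m).measurableSet
    simp only [Measure.smul_apply, smul_eq_mul, hlaw s F hv, hlaw t G hv, hcyl hF, hcyl hG]
    ring
  simpa [hlaw s F hA, hlaw t G hA, mul_comm] using congrArg (· A) heq

theorem hasTransition_of_isFutureLaw {κ : E → Measure (ℕ → E)}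
    (hκ : ∀ a, IsFutureLaw μ a (κ a)) : HasTransition μ fun a b => κ a {x | x 1 = b} :=
  fun w t b => hκ _ (isHistory_cylinder w t) (measurableSet_eval_eq 1 b)

theorem HasTransition.isFutureLaw_cond [IsFiniteMeasure μ] (h : HasTransition μ k)
    (hG : IsHistory a s G) (hpos : μ G ≠ 0) :
    IsFutureLaw μ a ((ProbabilityTheory.cond μ G).map (pathShift s)) := by
  intro t F A hF hA
  rw [Measure.map_apply (measurable_pathShift s) hA, ProbabilityTheory.cond_apply hG.measurableSet,
    mul_left_comm, mul_comm (μ F), ← h.measure_inter_pathShift_mul hF hG hA, mul_comm, mul_assoc,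
    ENNReal.mul_inv_cancel hpos (measure_ne_top μ G), mul_one]

theorem HasTransition.exists_isFutureLaw [IsFiniteMeasure μ] (h : HasTransition μ k) (a : E) :
    ∃ κ : Measure (ℕ → E), IsProbabilityMeasure κ ∧ IsFutureLaw μ a κ ∧
      ((∀ᵐ x ∂μ, ∀ i, x i = a → x (i + 1) = a) → κ {x | x 1 = a} = 1) := by
  by_cases habs : ∀ᵐ x ∂μ, ∀ i, x i = a → x (i + 1) = a
  · refine ⟨.dirac fun _ => a, inferInstance, isFutureLaw_dirac habs, fun _ => ?_⟩
    rw [Measure.dirac_apply' _ (measurableSet_eval_eq 1 a)]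
    simp
  · obtain ⟨s, hs⟩ : ∃ s, μ {x | x s = a} ≠ 0 := by
      by_contra! hnull
      refine habs (ae_all_iff.2 fun i => ?_)
      exact (measure_eq_zero_iff_ae_notMem.1 (hnull i)).mono fun x hx hxi => absurd hxi hx
    have := ProbabilityTheory.cond_isProbabilityMeasure hs
    exact ⟨_, Measure.isProbabilityMeasure_map (measurable_pathShift s).aemeasurable,
      h.isFutureLaw_cond (isHistory_eval_eq a s) hs, fun h => absurd h habs⟩

end Transition

section MarkovChain

variable {Ω : Type*} [MeasurableSpace Ω] {P : Measure Ω} {X : ℕ → Ω → ℕ} {ν : ℕ → ℝ}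
  {K : ℕ → ℕ → ℝ} {k : ℕ → ℕ → ℝ≥0∞}

theorem tsum_measure_preimage_singleton_eq_univ {β : Type*} [Countable β] [MeasurableSpace β]
    [MeasurableSingletonClass β] {f : Ω → β} (hf : Measurable f) :
    ∑' b, P (f ⁻¹' {b}) = P univ := by
  rw [← preimage_univ (f := f),
    ← tsum_measure_preimage_singleton countable_univ fun b _ => hf (measurableSet_singleton b),
    tsum_univ fun b => P (f ⁻¹' {b})]

theorem hasSum_measureReal_preimage_singleton {β : Type*} [Countable β] [MeasurableSpace β]
    [MeasurableSingletonClass β] [IsProbabilityMeasure P] {f : Ω → β} (hf : Measurable f) :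
    HasSum (fun b => P.real (f ⁻¹' {b})) 1 := by
  have hsum : ∑' b, P (f ⁻¹' {b}) = 1 :=
    (tsum_measure_preimage_singleton_eq_univ hf).trans measure_univ
  have h := ENNReal.hasSum_toReal (hsum.trans_ne ENNReal.one_ne_top)
  rwa [← ENNReal.tsum_toReal_eq fun _ => measure_ne_top P _, hsum, ENNReal.toReal_one] at h

theorem isProbVec_measureReal [IsProbabilityMeasure P] {f : Ω → ℕ} (hf : Measurable f) :
    IsProbVec fun a => P.real {ω | f ω = a} :=
  ⟨fun _ => measureReal_nonneg, hasSum_measureReal_preimage_singleton hf⟩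

theorem isMarkovChain_iff_measure_cylinder : IsMarkovChain P X ν K ↔ (∀ i, Measurable (X i)) ∧
    ∀ w l, P.map (fun ω i => X i ω) (PiNat.cylinder w (l + 1)) =
      ENNReal.ofReal (ν (w 0) * ∏ i ∈ Finset.range l, K (w i) (w (i + 1))) := by
  refine and_congr_right fun hX => forall_comm.trans <| forall₂_congr fun w l => ?_
  rw [Measure.map_apply (measurable_pi_lambda _ hX) (isHistory_cylinder w l).measurableSet,
    Finset.range_eq_Ico, ← Finset.Ico_add_one_right_eq_Icc, ← zero_add 1,
    ← Finset.prod_Ico_add' (fun i => K (w (i - 1)) (w i)) 0 l 1]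
  simp [PiNat.cylinder]

theorem IsMarkovChain.isProbabilityMeasure (hX : IsMarkovChain P X ν K) (hν : IsProbVec ν) :
    IsProbabilityMeasure P := by
  refine ⟨?_⟩
  have hinit (a : ℕ) : P (X 0 ⁻¹' {a}) = ENNReal.ofReal (ν a) := by
    simpa using! hX.2 0 fun _ => a
  simp_rw [← tsum_measure_preimage_singleton_eq_univ (hX.1 0), hinit]
  rw [← ENNReal.ofReal_tsum_of_nonneg hν.1 hν.2.summable, hν.2.tsum_eq, ENNReal.ofReal_one]

theorem IsMarkovChain.hasTransition (hX : IsMarkovChain P X ν K) (hK : ∀ a b, 0 ≤ K a b) :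
    HasTransition (P.map fun ω i => X i ω) fun a b => ENNReal.ofReal (K a b) := by
  intro w t b
  have hcyl := (isMarkovChain_iff_measure_cylinder.1 hX).2
  have hupdate : PiNat.cylinder w (t + 1) ∩ {x | x (t + 1) = b} =
      PiNat.cylinder (Function.update w (t + 1) b) (t + 1 + 1) := by
    ext x
    rw [PiNat.mem_cylinder_iff, Nat.forall_lt_succ_right, Function.update_self]
    refine and_congr_left' <| forall₂_congr fun i hi => ?_
    rw [Function.update_of_ne hi.ne]
  have hprod : ∏ i ∈ Finset.range t,
      K (Function.update w (t + 1) b i) (Function.update w (t + 1) b (i + 1)) =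
        ∏ i ∈ Finset.range t, K (w i) (w (i + 1)) :=
    Finset.prod_congr rfl fun i hi => by
      have := Finset.mem_range.1 hi
      rw [Function.update_of_ne (by omega), Function.update_of_ne (by omega)]
  rw [hupdate, hcyl, hcyl, Finset.prod_range_succ, hprod, Function.update_self,
    Function.update_of_ne (by omega), Function.update_of_ne (by omega), ← mul_assoc,
    ENNReal.ofReal_mul' (hK _ _)]

theorem HasTransition.exists_isMarkovChain [IsProbabilityMeasure P] (hX : ∀ i, Measurable (X i))
    (h : HasTransition (P.map fun ω i => X i ω) k) :
    ∃ K, IsStochastic K ∧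
      (∀ a, (∀ᵐ ω ∂P, ∀ i, X i ω = a → X (i + 1) ω = a) → K a a = 1) ∧
      IsMarkovChain P X (fun a => P.real {ω | X 0 ω = a}) K := by
  have hXm : Measurable fun ω i => X i ω := measurable_pi_lambda _ hX
  have : IsProbabilityMeasure (P.map fun ω i => X i ω) :=
    Measure.isProbabilityMeasure_map hXm.aemeasurable
  choose κ hκprob hκ habs using h.exists_isFutureLaw
  refine ⟨fun a b => (κ a).real {x | x 1 = b}, ⟨fun _ _ => measureReal_nonneg, fun a =>
    hasSum_measureReal_preimage_singleton (measurable_pi_apply 1)⟩, fun a ha => ?_,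
    isMarkovChain_iff_measure_cylinder.2 ⟨hX, fun w l => ?_⟩⟩
  · have hae := (ae_map_iff hXm.aemeasurable (measurableSet_forall_eval_succ_eq a)).2 ha
    exact congrArg ENNReal.toReal (habs a hae)
  · have hinit : (P.map fun ω i => X i ω) {x | x 0 = w 0} = P {ω | X 0 ω = w 0} :=
      Measure.map_apply hXm (measurableSet_eval_eq 0 (w 0))
    have hcyl := (hasTransition_of_isFutureLaw hκ).measure_inter_pathShift_cylinder (t := 0)
      (F := univ) (fun _ _ _ => rfl) w l
    have hshift : pathShift 0 = (id : (ℕ → ℕ) → ℕ → ℕ) := by ext; simp [pathShift]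
    rw [univ_inter, univ_inter, hshift, preimage_id, hinit] at hcyl
    rw [hcyl, ENNReal.ofReal_mul measureReal_nonneg,
      ENNReal.ofReal_prod_of_nonneg fun _ _ => measureReal_nonneg]
    simp only [ofReal_measureReal (measure_ne_top _ _)]

end MarkovChain

section TraceLaw

variable {μ κ : Measure (ℕ → ℕ)} {k : ℕ → ℕ → ℝ≥0∞} {a : ℕ}

theorem measurable_proj (N : ℕ) : Measurable (proj N) := by
  refine measurable_pi_lambda _ fun j => measurable_of_Ioi fun c => ?_
  have hunion : (fun x => proj N x j) ⁻¹' Ioi c =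
      ⋃ t : ℕ, {x | hitIdx x N j = t ∧ c < x t} := by
    ext x
    simp [lt_proj_iff]
  rw [hunion]
  refine .iUnion fun t => measurableSet_of_dependsOn (t := t) fun x y hxy => ?_
  simp only [mem_ofPred_eq, hitIdx_eq_coe_congr hxy, hxy t self_mem_Iic]

theorem IsHistory.preimage_proj {j : ℕ} {G : Set (ℕ → ℕ)} (hG : IsHistory a j G) (N t : ℕ) :
    IsHistory a t (proj N ⁻¹' G ∩ {x | hitIdx x N j = t}) where
  dependsOn x y hxy := by
    simp only [mem_inter_iff, mem_preimage, mem_ofPred_eq, eq_iff_iff, ← hitIdx_eq_coe_congr hxy]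
    exact and_congr_left fun ht => (hG.dependsOn fun i hi => proj_congr hxy ht hi).to_iff
  subset_eval _ hx := (proj_of_hitIdx_eq hx.2).symm.trans (hG.subset_eval hx.1)

theorem IsFutureLaw.map_proj (hκ : IsFutureLaw μ a κ) (ha : a ≠ 0) (N : ℕ) :
    IsFutureLaw (μ.map (proj N)) a (κ.map (proj N)) := by
  intro j G A hG hA
  have hprojA := measurable_proj N hA
  set F : ℕ → Set (ℕ → ℕ) := fun t => proj N ⁻¹' G ∩ {x | hitIdx x N j = t}
  have hF (t : ℕ) : IsHistory a t (F t) := hG.preimage_proj N t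
  have hdisj : Pairwise (Function.onFun Disjoint F) := fun s t hst =>
    disjoint_left.2 fun x hs ht => hst (by exact_mod_cast hs.2.symm.trans ht.2)
  have hcover : proj N ⁻¹' G = ⋃ t, F t := by
    refine Subset.antisymm (fun x hx => ?_) (iUnion_subset fun t => inter_subset_left)
    have hpos : 0 < proj N x j := Nat.pos_of_ne_zero fun h0 => ha (hG.subset_eval hx ▸ h0)
    obtain ⟨t, ht, -⟩ := lt_proj_iff.1 hpos
    exact mem_iUnion.2 ⟨t, hx, ht⟩
  have hfuture : proj N ⁻¹' (G ∩ pathShift j ⁻¹' A) =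
      ⋃ t, F t ∩ pathShift t ⁻¹' (proj N ⁻¹' A) := by
    rw [preimage_inter, hcover, iUnion_inter]
    refine iUnion_congr fun t => ext fun x => and_congr_right fun hx => ?_
    have : proj N (pathShift t x) = pathShift j (proj N x) := funext (proj_pathShift hx.2)
    simp only [mem_preimage, this]
  rw [Measure.map_apply (measurable_proj N) (hG.measurableSet.inter (measurable_pathShift j hA)),
    Measure.map_apply (measurable_proj N) hG.measurableSet,
    Measure.map_apply (measurable_proj N) hA, hfuture, hcover,
    measure_iUnion hdisj fun t => (hF t).measurableSet,
    measure_iUnion (hdisj.mono fun s t h => h.mono inter_subset_left inter_subset_left)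
      fun t => (hF t).measurableSet.inter (measurable_pathShift t hprojA),
    ← ENNReal.tsum_mul_right]
  exact tsum_congr fun t => hκ (hF t) hprojA

theorem HasTransition.exists_map_proj [IsFiniteMeasure μ] (h : HasTransition μ k)
    (hμ : ∀ᵐ x ∂μ, x ∈ PathSpace) (N : ℕ) : ∃ k', HasTransition (μ.map (proj N)) k' := by
  have hfuture (a : ℕ) : ∃ κ, IsFutureLaw (μ.map (proj N)) a κ := by
    by_cases ha : a = 0
    · refine ⟨_, isFutureLaw_dirac ?_⟩
      refine (ae_map_iff (measurable_proj N).aemeasurable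
        (measurableSet_forall_eval_succ_eq a)).2 (hμ.mono fun x hx => ?_)
      exact ha ▸ mem_pathSpace_iff.1 (proj_mem_pathSpaceN hx).1
    · obtain ⟨κ, -, hκ, -⟩ := h.exists_isFutureLaw a
      exact ⟨_, hκ.map_proj ha N⟩
  choose κ hκ using hfuture
  exact ⟨_, hasTransition_of_isFutureLaw hκ⟩

end TraceLaw

section Forward

variable {Ω : Type*} [MeasurableSpace Ω] {P : Measure Ω} {X : ℕ → Ω → ℕ} {ν : ℕ → ℝ}
  {K : ℕ → ℕ → ℝ} {k : ℕ → ℕ → ℝ≥0∞}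

theorem MemK.apply_zero_eq_zero (hK : MemK K) {b : ℕ} (hb : b ≠ 0) : K 0 b = 0 := by
  have hpair := sum_le_hasSum {0, b} (fun c _ => hK.1.1 0 c) (hK.1.2 0)
  rw [Finset.sum_pair hb.symm, hK.2] at hpair
  exact le_antisymm (by linarith) (hK.1.1 0 b)

theorem IsMarkovChain.ae_map_mem_pathSpace (hX : IsMarkovChain P X ν K) (hK : MemK K) :
    ∀ᵐ x ∂P.map fun ω i => X i ω, x ∈ PathSpace := by
  have habs := (hX.hasTransition hK.1.1).ae_eval_succ_eq (a := 0) fun b hb => by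
    rw [hK.apply_zero_eq_zero hb, ENNReal.ofReal_zero]
  exact habs.mono fun _ => mem_pathSpace_iff.2

theorem HasTransition.exists_isMarkovChain_memKN [IsProbabilityMeasure P] {N : ℕ}
    (hX : ∀ i, Measurable (X i)) (h : HasTransition (P.map fun ω i => X i ω) k)
    (hN : ∀ᵐ ω ∂P, (fun i => X i ω) ∈ PathSpaceN N) :
    ∃ ν K, IsProbVec ν ∧ (∀ a, N < a → ν a = 0) ∧ MemKN N K ∧ IsMarkovChain P X ν K := by
  obtain ⟨K, hK, habs, hchain⟩ := h.exists_isMarkovChain hX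
  refine ⟨_, K, isProbVec_measureReal (hX 0), fun a ha => ?_,
    ⟨hK, fun a ha => habs a (hN.mono fun ω hω i hi => ?_)⟩, hchain⟩
  · have hnull : P {ω | X 0 ω = a} = 0 := measure_eq_zero_iff_ae_notMem.2 <|
      hN.mono fun ω hω (h0 : X 0 ω = a) => ha.not_ge (h0 ▸ hω.2 0)
    exact congrArg ENNReal.toReal hnull
  · obtain rfl : a = 0 := by
      by_contra h0
      exact ha ⟨Nat.one_le_iff_ne_zero.2 h0, hi ▸ hω.2 i⟩
    exact mem_pathSpace_iff.1 hω.1 i hi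

theorem IsMarkovChain.isVMC_proj (hX : IsMarkovChain P X ν K) (hν : IsProbVec ν) (hK : MemK K) :
    IsVMC P fun ω (N : ℕ+) (i : ℕ) => proj N (fun j => X j ω) i := by
  have := hX.isProbabilityMeasure hν
  have hXm : Measurable fun ω i => X i ω := measurable_pi_lambda _ hX.1
  have hlaw := hX.ae_map_mem_pathSpace hK
  have hpath := ae_of_ae_map hXm.aemeasurable hlaw
  refine ⟨hpath.mono fun _ => iota_mem_virtualPathSpace, fun N => ?_⟩
  have hprojm := (measurable_proj N).comp hXm
  obtain ⟨k, hk⟩ := (hX.hasTransition hK.1.1).exists_map_proj hlaw N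
  rw [Measure.map_map (measurable_proj N) hXm] at hk
  exact hk.exists_isMarkovChain_memKN (fun i => (measurable_pi_apply i).comp hprojm)
    (hpath.mono fun _ => proj_mem_pathSpaceN)

end Forward

section Limit

variable {E ι : Type*} [MeasurableSpace E] {l : Filter ι}

-- Where `ks n a b` does not converge, no history ending at `a` is charged by `μ`, so the value of
-- the limit there is immaterial.
theorem HasTransition.of_tendsto [l.NeBot] {μ : Measure (ℕ → E)} [IsFiniteMeasure μ]
    {μs : ι → Measure (ℕ → E)} {ks : ι → E → E → ℝ≥0∞} (h : ∀ n, HasTransition (μs n) (ks n))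
    (hlim : ∀ ⦃F t⦄, DependsOn (· ∈ F) (Iic t) → Tendsto (fun n => μs n F) l (𝓝 (μ F))) :
    HasTransition μ fun a b => limsup (fun n => ks n a b) l := by
  intro w t b
  have hC := hlim (isHistory_cylinder w t).dependsOn
  have hD := hlim ((isHistory_eval_eq b (t + 1)).inter_of_dependsOn
    (isHistory_cylinder w t).dependsOn t.le_succ).dependsOn
  by_cases h0 : μ (PiNat.cylinder w (t + 1)) = 0
  · rw [h0, zero_mul, measure_mono_null inter_subset_left h0]
  have hratio := ENNReal.Tendsto.div hD (.inr h0) hC (.inl (measure_ne_top μ _))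
  have hks : ∀ᶠ n in l, μs n (PiNat.cylinder w (t + 1) ∩ {x | x (t + 1) = b}) /
      μs n (PiNat.cylinder w (t + 1)) = ks n (w t) b := by
    filter_upwards [hC.eventually_ne h0, hC.eventually_ne (measure_ne_top μ _)] with n hn0 hntop
    rw [h n, mul_comm, ENNReal.mul_div_cancel_right hn0 hntop]
  beta_reduce
  rw [(hratio.congr' hks).limsup_eq, ENNReal.mul_div_cancel h0 (measure_ne_top μ _)]

theorem tendsto_map_apply_of_dependsOn [Countable E] [MeasurableSingletonClass E]
    [TopologicalSpace E] [DiscreteTopology E] [l.IsCountablyGenerated]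
    {Ω : Type*} [MeasurableSpace Ω] {P : Measure Ω} [IsFiniteMeasure P]
    {f : ι → Ω → ℕ → E} {g : Ω → ℕ → E} (hf : ∀ n, Measurable (f n)) (hg : Measurable g)
    (hfg : ∀ᵐ ω ∂P, Tendsto (fun n => f n ω) l (𝓝 (g ω)))
    {F : Set (ℕ → E)} {t : ℕ} (hF : DependsOn (· ∈ F) (Iic t)) :
    Tendsto (fun n => P.map (f n) F) l (𝓝 (P.map g F)) := by
  have hFm := measurableSet_of_dependsOn hF
  simp_rw [Measure.map_apply hg hFm, Measure.map_apply (hf _) hFm]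
  refine tendsto_measure_of_ae_tendsto_indicator_of_isFiniteMeasure l (hg hFm)
    (fun n => hf n hFm) ?_
  filter_upwards [hfg] with ω hω
  have hagree : ∀ᶠ n in l, ∀ i ∈ Iic t, f n ω i = g ω i :=
    (finite_Iic t).eventually_all.2 fun i _ =>
      tendsto_pure.1 (nhds_discrete E ▸ tendsto_pi_nhds.1 hω i)
  exact hagree.mono fun n hn => (hF hn).to_iff

end Limit

section Backward

variable {Ω : Type*} [MeasurableSpace Ω] {P : Measure Ω} {X : Ω → ℕ+ → ℕ → ℕ}

theorem exists_measurable_ae_eq_proj (hX : ∀ N, Measurable fun ω => X ω N)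
    (hι : ∀ᵐ ω ∂P, ∃ y ∈ PathSpace, X ω = fun (N : ℕ+) (i : ℕ) => proj N y i) :
    ∃ Y : Ω → ℕ → ℕ, Measurable Y ∧
      ∀ᵐ ω ∂P, Y ω ∈ PathSpace ∧ X ω = fun (N : ℕ+) (i : ℕ) => proj N (Y ω) i := by
  have hlim (y : ℕ → ℕ) : Tendsto (fun N : ℕ+ => proj N y) atTop (𝓝 y) :=
    (tendsto_proj y).comp tendsto_PNat_val_atTop_atTop
  obtain ⟨Y, hY, hXY⟩ := measurable_limit_of_tendsto_metrizable_ae (μ := P) (L := atTop)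
    (fun N => (hX N).aemeasurable) (hι.mono fun ω ⟨y, _, hy⟩ => ⟨y, by simpa [hy] using! hlim y⟩)
  refine ⟨Y, hY, ?_⟩
  filter_upwards [hι, hXY] with ω ⟨y, hy, hXy⟩ hω
  obtain rfl : Y ω = y := tendsto_nhds_unique hω (by simpa [hXy] using! hlim y)
  exact ⟨hy, hXy⟩

theorem IsVMC.exists_isMarkovChain (hX : IsVMC P X)
    (hι : ∀ᵐ ω ∂P, ∃ y ∈ PathSpace, X ω = fun (N : ℕ+) (i : ℕ) => proj N y i) :
    ∃ (Y : ℕ → Ω → ℕ) (ν : ℕ → ℝ) (K : ℕ → ℕ → ℝ),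
      IsProbVec ν ∧ MemK K ∧ IsMarkovChain P Y ν K ∧
      ∀ᵐ ω ∂P, X ω = fun (N : ℕ+) (i : ℕ) => proj N (fun j => Y j ω) i := by
  choose ν K hν _ hK hchain using hX.2
  have := (hchain 1).isProbabilityMeasure (hν 1)
  have hXm (N : ℕ+) : Measurable fun ω => X ω N := measurable_pi_lambda _ (hchain N).1
  have htrans (N : ℕ+) := (hchain N).hasTransition (hK N).1.1
  obtain ⟨Y, hY, hYι⟩ := exists_measurable_ae_eq_proj hXm hι
  have hlim : ∀ᵐ ω ∂P, Tendsto (X ω) atTop (𝓝 (Y ω)) := hYι.mono fun ω hω =>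
    hω.2 ▸ (tendsto_proj (Y ω)).comp tendsto_PNat_val_atTop_atTop
  have := Measure.isProbabilityMeasure_map (μ := P) hY.aemeasurable
  have hYtrans := HasTransition.of_tendsto htrans fun _ _ hF =>
    tendsto_map_apply_of_dependsOn hXm hY hlim hF
  obtain ⟨K, hK, habs, hYchain⟩ := hYtrans.exists_isMarkovChain fun i =>
    (measurable_pi_apply i).comp hY
  exact ⟨_, _, K, isProbVec_measureReal ((measurable_pi_apply 0).comp hY),
    ⟨hK, habs 0 (hYι.mono fun ω hω => mem_pathSpace_iff.1 hω.1)⟩, hYchain,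
    hYι.mono fun _ hω => hω.2⟩

end Backward

/-- If X is a Markov chain in ℕ with cemetery 0, then ι(X) = (P_N(X))_N is a virtual
Markov chain; conversely, a virtual Markov chain X with ℙ(X ∈ ι(𝒞)) = 1 is of the form
ι(X) (a.s.) for some Markov chain X in ℕ with cemetery 0 on the same probability space. -/
theorem mc_iff_vmc_in_iota {Ω : Type*} [MeasurableSpace Ω] (P : Measure Ω) :
    (∀ (X : ℕ → Ω → ℕ) (ν : ℕ → ℝ) (K : ℕ → ℕ → ℝ),
      IsProbVec ν → MemK K → IsMarkovChain P X ν K →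
      IsVMC P fun ω (N : ℕ+) (i : ℕ) => proj N (fun j => X j ω) i) ∧
    (∀ X : Ω → ℕ+ → ℕ → ℕ, IsVMC P X →
      (∀ᵐ ω ∂P, ∃ y ∈ PathSpace, X ω = fun (N : ℕ+) (i : ℕ) => proj N y i) →
      ∃ (Y : ℕ → Ω → ℕ) (ν : ℕ → ℝ) (K : ℕ → ℕ → ℝ),
        IsProbVec ν ∧ MemK K ∧ IsMarkovChain P Y ν K ∧
        ∀ᵐ ω ∂P, X ω = fun (N : ℕ+) (i : ℕ) => proj N (fun j => Y j ω) i) :=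
  ⟨fun _ _ _ hν hK hX => hX.isVMC_proj hν hK, fun _ hX hι => hX.exists_isMarkovChain hι⟩
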